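/- Let a be an irrational real number and let f : ℝ³ → ℝ be a smooth function satisfying f(x+1,y,t) = f(x,y,t), f(x,y+1,t) = f(x,y,t) for all (x,y,t), and Xf = 0 everywhere. Then f depends only on the third coordinate: f(x,y,t) = f(x',y',t) for all x, x', y, y', t ∈ ℝ. -/

import Mathlib

/-- The vector field `X = λᵗ(∂/∂x + a ∂/∂y)` acting on functions. -/
noncomputable def Xop (lam a : ℝ) (f : ℝ × ℝ × ℝ → ℝ) (p : ℝ × ℝ × ℝ) : ℝ :=
  lam ^ p.2.2 * (deriv (fun x => f (x, p.2.1, p.2.2)) p.1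
    + a * deriv (fun y => f (p.1, y, p.2.2)) p.2.1)

/-! The periods of a continuous function form a closed subgroup. On a fixed slice `t = const`, the
equation `Xf = 0` says that every multiple of `(1, a)` is a period, and `(1, 0)`, `(0, 1)` are
periods by assumption. Hence `(0, a) = (1, a) - (1, 0)` and `(0, 1)` are periods; as `a` is
irrational they generate a dense subgroup of the line `{0} × ℝ`, and this line together with
`ℝ (1, a)` spans the plane. -/

section Periods

variable {G α : Type*} [AddGroup G]

/-- The subgroup of all periods of a function on an additive group, acting by right translation as
in `Function.Periodic`. For a continuous function it is closed, so a dense set of periods forces the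
function to be constant. -/
def periodSubgroup (f : G → α) : AddSubgroup G where
  carrier := {c | Function.Periodic f c}
  zero_mem' x := by rw [add_zero]
  add_mem' hc hd := hc.add_period hd
  neg_mem' hc := hc.neg

theorem mem_periodSubgroup {f : G → α} {c : G} :
    c ∈ periodSubgroup f ↔ Function.Periodic f c :=
  Iff.rfl

theorem isClosed_periodSubgroup [TopologicalSpace G] [SeparatelyContinuousAdd G]
    [TopologicalSpace α] [T2Space α] {f : G → α} (hf : Continuous f) :
    IsClosed (periodSubgroup f : Set G) := by
  have h_inter : (periodSubgroup f : Set G) = ⋂ x, {c | f (x + c) = f x} := by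
    ext c
    simp only [SetLike.mem_coe, mem_periodSubgroup, Function.Periodic, Set.mem_iInter,
      Set.mem_ofPred_eq]
  rw [h_inter]
  exact isClosed_iInter fun x => isClosed_eq (hf.comp (continuous_const_add x)) continuous_const

theorem eq_of_periodSubgroup_eq_top {f : G → α} (hf : periodSubgroup f = ⊤) (x y : G) :
    f x = f y := by
  have h_period : Function.Periodic f (-y + x) :=
    mem_periodSubgroup.mp (hf ▸ AddSubgroup.mem_top _)
  simpa only [add_neg_cancel_left] using h_period y

end Periods

theorem addSubgroup_eq_top_of_isClosed_of_irrational {H : AddSubgroup (ℝ × ℝ)}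
    (hH : IsClosed (H : Set (ℝ × ℝ))) {a p q : ℝ} (ha : Irrational (a * p / q))
    (h_line : ∀ s : ℝ, s • (1, a) ∈ H) (hp : (p, 0) ∈ H) (hq : (0, q) ∈ H) : H = ⊤ := by
  let V : AddSubgroup ℝ := H.comap (AddMonoidHom.inr ℝ ℝ)
  have hV_closed : IsClosed (V : Set ℝ) := hH.preimage (by fun_prop : Continuous (Prod.mk (0 : ℝ)))
  have hap : a * p ∈ V := by
    have h_sub : ((0, a * p) : ℝ × ℝ) = p • (1, a) - (p, 0) := by
      ext <;> simp [mul_comm]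
    change (0, a * p) ∈ H
    exact h_sub ▸ H.sub_mem (h_line p) hp
  have h_le : AddSubgroup.closure {a * p, q} ≤ V :=
    (AddSubgroup.closure_le V).mpr (Set.pair_subset hap hq)
  have hV : (V : Set ℝ) = Set.univ :=
    hV_closed.closure_eq.symm.trans
      ((dense_addSubgroupClosure_pair_iff.mpr ha).mono h_le).closure_eq
  refine (AddSubgroup.eq_top_iff' H).mpr fun ⟨x, y⟩ => ?_
  have h_vert : (0, y - a * x) ∈ H := Set.eq_univ_iff_forall.mp hV (y - a * x)
  have h_add : ((x, y) : ℝ × ℝ) = x • (1, a) + (0, y - a * x) := by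
    ext <;> simp [mul_comm]
  exact h_add ▸ H.add_mem (h_line x) h_vert

theorem periodic_smul_of_hasLineDerivAt_zero {E F : Type*} [AddCommGroup E] [Module ℝ E]
    [NormedAddCommGroup F] [NormedSpace ℝ F] {g : E → F} {v : E}
    (hv : ∀ z, HasLineDerivAt ℝ g 0 z v) (s : ℝ) : Function.Periodic g (s • v) := by
  intro z
  have h_deriv (r : ℝ) : HasDerivAt (fun r : ℝ => g (z + r • v)) 0 r := by
    have h_line : HasDerivAt (fun u : ℝ => g (z + r • v + u • v)) 0 (r - r) := by
      rw [sub_self]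
      exact hv (z + r • v)
    simpa only [add_assoc, ← add_smul, add_sub_cancel] using h_line.comp_sub_const r r
  simpa only [zero_smul, add_zero] using
    is_const_of_deriv_eq_zero (fun r => (h_deriv r).differentiableAt)
      (fun r => (h_deriv r).deriv) s 0

theorem eq_of_hasLineDerivAt_zero_of_periodic {F : Type*} [NormedAddCommGroup F]
    [NormedSpace ℝ F] {g : ℝ × ℝ → F} (hg : Continuous g) {a p q : ℝ}
    (ha : Irrational (a * p / q)) (hga : ∀ z, HasLineDerivAt ℝ g 0 z (1, a))
    (hp : Function.Periodic g (p, 0)) (hq : Function.Periodic g (0, q)) (z w : ℝ × ℝ) :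
    g z = g w :=
  eq_of_periodSubgroup_eq_top
    (addSubgroup_eq_top_of_isClosed_of_irrational (isClosed_periodSubgroup hg) ha
      (periodic_smul_of_hasLineDerivAt_zero hga) hp hq) z w

theorem fderiv_apply_prod_eq_deriv_add {𝕜 F : Type*} [NontriviallyNormedField 𝕜]
    [NormedAddCommGroup F] [NormedSpace 𝕜 F] {g : 𝕜 × 𝕜 → F} {x y : 𝕜}
    (hg : DifferentiableAt 𝕜 g (x, y)) (u v : 𝕜) :
    fderiv 𝕜 g (x, y) (u, v) =
      u • deriv (fun x' => g (x', y)) x + v • deriv (fun y' => g (x, y')) y := by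
  have h_fst : HasDerivAt (fun x' => g (x', y)) (fderiv 𝕜 g (x, y) (1, 0)) x :=
    hg.hasFDerivAt.comp_hasDerivAt x ((hasDerivAt_id x).prodMk (hasDerivAt_const x y))
  have h_snd : HasDerivAt (fun y' => g (x, y')) (fderiv 𝕜 g (x, y) (0, 1)) y :=
    hg.hasFDerivAt.comp_hasDerivAt y ((hasDerivAt_const y x).prodMk (hasDerivAt_id y))
  have h_split : ((u, v) : 𝕜 × 𝕜) = u • (1, 0) + v • (0, 1) := by
    ext <;> simp
  rw [h_fst.deriv, h_snd.deriv, h_split, map_add, map_smul, map_smul]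

theorem Xop_eq_rpow_mul_fderiv (lam a : ℝ) {f : ℝ × ℝ × ℝ → ℝ} {x y t : ℝ}
    (hf : DifferentiableAt ℝ (fun z : ℝ × ℝ => f (z.1, z.2, t)) (x, y)) :
    Xop lam a f (x, y, t) =
      lam ^ t * fderiv ℝ (fun z : ℝ × ℝ => f (z.1, z.2, t)) (x, y) (1, a) := by
  rw [fderiv_apply_prod_eq_deriv_add hf, one_smul, smul_eq_mul, Xop]

theorem stmt7_general {lam a p q : ℝ} (hlam : 0 < lam) (ha : Irrational (a * p / q))
    {f : ℝ × ℝ × ℝ → ℝ} (hf : ∀ t, Differentiable ℝ fun z : ℝ × ℝ => f (z.1, z.2, t))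
    (hper₁ : ∀ x y t : ℝ, f (x + p, y, t) = f (x, y, t))
    (hper₂ : ∀ x y t : ℝ, f (x, y + q, t) = f (x, y, t))
    (hX : ∀ z : ℝ × ℝ × ℝ, Xop lam a f z = 0) (x x' y y' t : ℝ) :
    f (x, y, t) = f (x', y', t) := by
  let g : ℝ × ℝ → ℝ := fun z => f (z.1, z.2, t)
  have hg_deriv (z : ℝ × ℝ) : HasLineDerivAt ℝ g 0 z (1, a) := by
    have h_mul : lam ^ t * fderiv ℝ g z (1, a) = 0 :=
      (Xop_eq_rpow_mul_fderiv lam a (hf t z)).symm.trans (hX (z.1, z.2, t))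
    have h_fderiv : fderiv ℝ g z (1, a) = 0 :=
      (mul_eq_zero.mp h_mul).resolve_left (Real.rpow_pos_of_pos hlam t).ne'
    exact h_fderiv ▸ (hf t z).hasFDerivAt.hasLineDerivAt (1, a)
  have hg_fst : Function.Periodic g (p, 0) := fun z => by
    simpa only [g, Prod.fst_add, Prod.snd_add, add_zero] using hper₁ z.1 z.2 t
  have hg_snd : Function.Periodic g (0, q) := fun z => by
    simpa only [g, Prod.fst_add, Prod.snd_add, add_zero] using hper₂ z.1 z.2 t
  exact eq_of_hasLineDerivAt_zero_of_periodic (hf t).continuous ha hg_deriv hg_fst hg_snd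
    (x, y) (x', y')

/-- Let `a` be irrational and `f : ℝ³ → ℝ` smooth, `1`-periodic in the
first two coordinates, with `Xf = 0` everywhere. Then `f` depends only on the third
coordinate. -/
theorem stmt7 (lam a : ℝ) (hlam : 1 < lam) (ha : Irrational a)
    (f : ℝ × ℝ × ℝ → ℝ) (hf : ContDiff ℝ (⊤ : ℕ∞) f)
    (hper₁ : ∀ x y t : ℝ, f (x + 1, y, t) = f (x, y, t))
    (hper₂ : ∀ x y t : ℝ, f (x, y + 1, t) = f (x, y, t))
    (hX : ∀ p : ℝ × ℝ × ℝ, Xop lam a f p = 0) :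
    ∀ x x' y y' t : ℝ, f (x, y, t) = f (x', y', t) := by
  have hf' : Differentiable ℝ f := hf.differentiable (by simp)
  exact stmt7_general (by linarith) (by simpa using ha) (fun t => by fun_prop) hper₁ hper₂ hX
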